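/- Let (X, λ) be a finite measure space such that L¹(X, λ) is separable. Let (ν^n) be a sequence of Young measures on X satisfying, for some p ≥ 1, sup_n ∫_X ∫_ℝ |ξ|^p dν^n_z(ξ) dλ(z) < +∞, and define the associated kinetic functions f_n(z, ξ) = ν^n_z((ξ, +∞)). Then there exist a Young measure ν on X and a subsequence (still denoted (f_n)) such that f_n converges to the kinetic function f(z, ξ) = ν_z((ξ, +∞)) in the weak-* sense on X × ℝ: for every g ∈ L¹(X × ℝ, λ ⊗ Leb), lim_{n→∞} ∫_{X×ℝ} f_n(z,ξ) g(z,ξ) dλ(z) dξ = ∫_{X×ℝ} f(z,ξ) g(z,ξ) dλ(z) dξ. -/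

import Mathlib

open MeasureTheory Filter Set
open scoped ENNReal Topology

noncomputable section

/-- A Young measure on a measurable space `X`: a measurable family of Borel
probability measures on `ℝ` (measurability tested against bounded continuous
functions). -/
def IsYoungMeasure {X : Type*} [MeasurableSpace X] (ν : X → Measure ℝ) : Prop :=
  (∀ z, IsProbabilityMeasure (ν z)) ∧
  ∀ φ : BoundedContinuousFunction ℝ ℝ, Measurable fun z => ∫ ξ, φ ξ ∂(ν z)


/-- A bounded functional on `L¹` of a finite measure that is a limit of integration against
functions with values in `[0,1]` is represented by a function with values in `[0,1]`. -/
lemma represent_aux {X : Type*} [MeasurableSpace X] (lam : Measure X) [IsFiniteMeasure lam]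
    (T : Lp ℝ 1 lam →L[ℝ] ℝ)
    (h0 : ∀ s, MeasurableSet s → ∀ ψ : Lp ℝ 1 lam, ψ =ᵐ[lam] s.indicator (fun _ => (1 : ℝ)) →
      0 ≤ T ψ ∧ T ψ ≤ lam.real s) :
    ∃ h : X → ℝ, Measurable h ∧ (∀ z, 0 ≤ h z ∧ h z ≤ 1) ∧
      ∀ ψ : X → ℝ, ∀ hψ : Integrable ψ lam, T (hψ.toL1 ψ) = ∫ z, h z * ψ z ∂lam := by
  let one : Lp ℝ 2 lam := (memLp_const (1 : ℝ)).toLp _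
  have hone : one =ᵐ[lam] fun _ => (1 : ℝ) := MemLp.coeFn_toLp _
  let J : Lp ℝ 2 lam →L[ℝ] Lp ℝ 1 lam := (ContinuousLinearMap.mul ℝ ℝ).holderL lam 2 2 1 one
  have hJ : ∀ φ, J φ =ᵐ[lam] φ := by
    intro φ
    have := (ContinuousLinearMap.mul ℝ ℝ).coeFn_holder (r := 1) one φ
    filter_upwards [this, hone] with x hx h1
    change ((ContinuousLinearMap.mul ℝ ℝ).holder 1 one φ) x = _
    rw [hx, h1]; simp
  let h2 : Lp ℝ 2 lam := (InnerProductSpace.toDual ℝ (Lp ℝ 2 lam)).symm (T.comp J)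
  have hh2 : ∀ φ : Lp ℝ 2 lam, T (J φ) = ∫ z, h2 z * φ z ∂lam := by
    intro φ
    have : inner ℝ h2 φ = (T.comp J) φ := by simp [h2]
    rw [← ContinuousLinearMap.comp_apply, ← this, L2.inner_def]
    congr 1; ext z; simp [mul_comm]
  have hind : ∀ s, MeasurableSet s → 0 ≤ ∫ z in s, h2 z ∂lam ∧ ∫ z in s, h2 z ∂lam ≤ lam.real s ∧
      ∀ ψ : Lp ℝ 1 lam, ψ =ᵐ[lam] s.indicator (fun _ => (1 : ℝ)) → T ψ = ∫ z in s, h2 z ∂lam := by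
    intro s hs
    let φ : Lp ℝ 2 lam := indicatorConstLp 2 hs (measure_ne_top lam s) (1 : ℝ)
    have hφ : φ =ᵐ[lam] s.indicator (fun _ => (1 : ℝ)) := indicatorConstLp_coeFn
    have e : T (J φ) = ∫ z in s, h2 z ∂lam := by
      rw [hh2, ← integral_indicator hs]
      apply integral_congr_ae
      filter_upwards [hφ] with z hz
      rw [hz]; by_cases hzs : z ∈ s <;> simp [hzs]
    have := h0 s hs (J φ) ((hJ φ).trans hφ)
    rw [e] at this
    refine ⟨this.1, this.2, fun ψ hψ => ?_⟩
    rw [← e]; congr 1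
    exact Lp.ext (hψ.trans ((hJ φ).trans hφ).symm)
  have h2i : Integrable h2 lam := (Lp.memLp h2).integrable (by norm_num)
  have hnn : 0 ≤ᵐ[lam] h2 := ae_nonneg_of_forall_setIntegral_nonneg h2i fun s hs _ => (hind s hs).1
  have hle : h2 ≤ᵐ[lam] fun _ => (1 : ℝ) := by
    refine ae_le_of_forall_setIntegral_le h2i (integrable_const _) fun s hs _ => ?_
    simpa using (hind s hs).2.1
  have hm := (Lp.stronglyMeasurable h2).measurable
  let h : X → ℝ := fun z => max 0 (min (h2 z) 1)
  have hmeas : Measurable h := measurable_const.max (hm.min measurable_const)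
  have hb : ∀ z, 0 ≤ h z ∧ h z ≤ 1 := fun z => ⟨le_max_left _ _, by simp [h]⟩
  have heq : h =ᵐ[lam] h2 := by
    filter_upwards [hnn, hle] with z h1 h2'
    simp only [h]; rw [min_eq_left h2']; exact max_eq_right h1
  have hbI : ∀ ψ : X → ℝ, Integrable ψ lam → Integrable (fun z => h z * ψ z) lam := by
    intro ψ hψ
    refine hψ.bdd_mul (c := 1) hmeas.aestronglyMeasurable (ae_of_all _ fun z => ?_)
    rw [Real.norm_eq_abs, abs_of_nonneg (hb z).1]; exact (hb z).2
  refine ⟨h, hmeas, hb, ?_⟩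
  let hinf : Lp ℝ ∞ lam := (memLp_top_of_bound hmeas.aestronglyMeasurable 1
    (ae_of_all _ fun z => by rw [Real.norm_eq_abs, abs_of_nonneg (hb z).1]; exact (hb z).2)).toLp h
  have hhinf : hinf =ᵐ[lam] h := MemLp.coeFn_toLp _
  let T' : Lp ℝ 1 lam →L[ℝ] ℝ := (ContinuousLinearMap.mul ℝ ℝ).lpPairing lam ∞ 1 hinf
  have hT' : ∀ ψ : Lp ℝ 1 lam, T' ψ = ∫ z, h z * ψ z ∂lam := by
    intro ψ
    simp only [T', ContinuousLinearMap.lpPairing_eq_integral]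
    apply integral_congr_ae
    filter_upwards [hhinf] with z hz
    simp [hz]
  have hTT : ∀ ψ : Lp ℝ 1 lam, T ψ = T' ψ := by
    intro ψ
    refine Lp.induction (p := 1) (by simp) (motive := fun ψ => T ψ = T' ψ) ?_ ?_ ?_ ψ
    · intro c s hs hsm
      have e : (Lp.simpleFunc.indicatorConst 1 hs hsm.ne c : Lp ℝ 1 lam) =
          c • indicatorConstLp 1 hs hsm.ne (1 : ℝ) := by
        rw [Lp.simpleFunc.coe_indicatorConst]
        apply Lp.ext
        filter_upwards [Lp.coeFn_smul c (indicatorConstLp 1 hs hsm.ne (1 : ℝ)),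
          (indicatorConstLp_coeFn (p := 1) (hs := hs) (hμs := hsm.ne) (c := (1 : ℝ))),
          (indicatorConstLp_coeFn (p := 1) (hs := hs) (hμs := hsm.ne) (c := c))] with z h1 h2 h3
        rw [h1, h3, Pi.smul_apply, h2]
        by_cases hzs : z ∈ s <;> simp [hzs]
      rw [e, map_smul, map_smul]
      congr 1
      rw [(hind s hs).2.2 _ indicatorConstLp_coeFn, hT', ← integral_indicator hs]
      apply integral_congr_ae
      filter_upwards [heq, (indicatorConstLp_coeFn (p := 1) (hs := hs) (hμs := hsm.ne) (c := (1:ℝ)))]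
        with z hz hz'
      rw [hz']; by_cases hzs : z ∈ s <;> simp [hzs, hz]
    · intro f g hf hg _ h1 h2
      rw [map_add, map_add, h1, h2]
    · exact isClosed_eq T.continuous T'.continuous
  intro ψ hψ
  rw [hTT, hT']
  apply integral_congr_ae
  filter_upwards [hψ.coeFn_toL1] with z hz
  rw [hz]

lemma weakStar_aux {X : Type*} [MeasurableSpace X] (lam : Measure X) [IsFiniteMeasure lam]
    (hsep : TopologicalSpace.SeparableSpace (MeasureTheory.Lp ℝ 1 lam))
    {ι : Type*} [Countable ι] (u : ℕ → ι → X → ℝ) (hu : ∀ n i, Measurable (u n i))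
    (hub : ∀ n i z, 0 ≤ u n i z ∧ u n i z ≤ 1) :
    ∃ (s : ℕ → ℕ) (h : ι → X → ℝ), StrictMono s ∧ (∀ i, Measurable (h i)) ∧
      (∀ i z, 0 ≤ h i z ∧ h i z ≤ 1) ∧
      ∀ i, ∀ ψ : X → ℝ, Integrable ψ lam →
        Tendsto (fun k => ∫ z, u (s k) i z * ψ z ∂lam) atTop (𝓝 (∫ z, h i z * ψ z ∂lam)) := by
  have hub' : ∀ n i, ∀ᵐ z ∂lam, ‖u n i z‖ ≤ 1 := fun n i => ae_of_all _ fun z => by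
    rw [Real.norm_eq_abs, abs_of_nonneg (hub n i z).1]; exact (hub n i z).2
  let U : ℕ → ι → Lp ℝ ∞ lam := fun n i =>
    (memLp_top_of_bound (hu n i).aestronglyMeasurable 1 (hub' n i)).toLp (u n i)
  have hU : ∀ n i, U n i =ᵐ[lam] u n i := fun n i => MemLp.coeFn_toLp _
  have hUn : ∀ n i, ‖U n i‖ ≤ 1 := by
    intro n i
    refine (Lp.norm_le_of_ae_bound zero_le_one (C := 1) ?_).trans ?_
    · filter_upwards [hU n i, hub' n i] with z h1 h2
      rw [h1]; exact h2
    · simp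
  let P := (ContinuousLinearMap.mul ℝ ℝ).lpPairing lam ∞ 1
  have hP : ∀ n i (ψ : Lp ℝ 1 lam), P (U n i) ψ = ∫ z, u n i z * ψ z ∂lam := by
    intro n i ψ
    simp only [P, ContinuousLinearMap.lpPairing_eq_integral]
    apply integral_congr_ae
    filter_upwards [hU n i] with z hz
    simp [hz]
  let K : Set (WeakDual ℝ (Lp ℝ 1 lam)) := WeakDual.toStrongDual ⁻¹' Metric.closedBall 0 ‖P‖
  have hK : IsCompact K := WeakDual.isCompact_closedBall 0 ‖P‖
  have : CompactSpace K := isCompact_iff_compactSpace.mp hK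
  have : TopologicalSpace.MetrizableSpace K := WeakDual.metrizable_of_isCompact ℝ _ K hK
  have hmem : ∀ n i, StrongDual.toWeakDual (P (U n i)) ∈ K := by
    intro n i
    simp only [K, mem_preimage, Metric.mem_closedBall, dist_zero_right]
    refine (P.le_opNorm _).trans ?_
    exact mul_le_of_le_one_right (norm_nonneg _) (hUn n i)
  obtain ⟨T, s, hs, hT⟩ := CompactSpace.tendsto_subseq
    (fun n => (fun i => (⟨_, hmem n i⟩ : K)))
  have hlim : ∀ i (ψ : Lp ℝ 1 lam),
      Tendsto (fun k => ∫ z, u (s k) i z * ψ z ∂lam) atTop (𝓝 ((T i : WeakDual ℝ _) ψ)) := by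
    intro i ψ
    have h1 := (continuous_subtype_val.tendsto _).comp ((tendsto_pi_nhds.1 hT) i)
    have h2 := ((WeakDual.eval_continuous ψ).tendsto _).comp h1
    refine h2.congr fun k => ?_
    exact hP _ _ _
  have key : ∀ i, ∃ h : X → ℝ, Measurable h ∧ (∀ z, 0 ≤ h z ∧ h z ≤ 1) ∧
      ∀ ψ : X → ℝ, ∀ hψ : Integrable ψ lam,
        WeakDual.toStrongDual (T i : WeakDual ℝ (Lp ℝ 1 lam)) (hψ.toL1 ψ) =
          ∫ z, h z * ψ z ∂lam := by
    intro i
    apply represent_aux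
    intro t ht ψ hψ
    have e : ∀ k, ∫ z, u (s k) i z * ψ z ∂lam = ∫ z in t, u (s k) i z ∂lam := by
      intro k
      rw [← integral_indicator ht]
      apply integral_congr_ae
      filter_upwards [hψ] with z hz
      rw [hz]; by_cases hzs : z ∈ t <;> simp [hzs]
    have hl := hlim i ψ
    simp_rw [e] at hl
    refine ⟨ge_of_tendsto' hl fun k => integral_nonneg fun z => (hub _ _ z).1,
      le_of_tendsto' hl fun k => ?_⟩
    calc ∫ z in t, u (s k) i z ∂lam ≤ ∫ z in t, (1 : ℝ) ∂lam := by
          refine integral_mono_of_nonneg (ae_of_all _ fun z => (hub _ _ z).1)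
            (integrable_const _) (ae_of_all _ fun z => (hub _ _ z).2)
      _ = lam.real t := by simp
  choose h hm hb hh using key
  refine ⟨s, h, hs, hm, hb, fun i ψ hψ => ?_⟩
  rw [← hh i ψ hψ]
  refine (hlim i (hψ.toL1 ψ)).congr fun k => ?_
  apply integral_congr_ae
  filter_upwards [hψ.coeFn_toL1] with z hz
  rw [hz]

lemma young_measurable {X : Type*} [MeasurableSpace X] {ν : X → Measure ℝ}
    (h : IsYoungMeasure ν) : Measurable ν := by
  have hp := h.1
  refine Measurable.measure_of_isPiSystem_of_isProbabilityMeasure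
    (borel_eq_generateFrom_Iic ℝ ▸ (BorelSpace.measurable_eq (α := ℝ))) isPiSystem_Iic ?_
  rintro _ ⟨a, rfl⟩
  have hpos : ∀ n : ℕ, (0 : ℝ) < 1 / ((n : ℝ) + 1) := fun n => by positivity
  refine measurable_of_tendsto_metrizable' (u := atTop)
    (f := fun (n : ℕ) z => ∫⁻ ω, (thickenedIndicator (hpos n) (Iic a) ω : ℝ≥0∞) ∂(ν z)) ?_ ?_
  · intro n
    let φ : BoundedContinuousFunction ℝ ℝ := BoundedContinuousFunction.mkOfBound
      ⟨fun x => (thickenedIndicator (hpos n) (Iic a) x : ℝ),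
        NNReal.continuous_coe.comp (thickenedIndicator (hpos n) (Iic a)).continuous⟩ 1 (by
        intro x y
        have h1 := thickenedIndicator_le_one (hpos n) (Iic a) x
        have h2 := thickenedIndicator_le_one (hpos n) (Iic a) y
        have h1' : (thickenedIndicator (hpos n) (Iic a) x : ℝ) ≤ 1 := by exact_mod_cast h1
        have h2' : (thickenedIndicator (hpos n) (Iic a) y : ℝ) ≤ 1 := by exact_mod_cast h2
        have h3 := (thickenedIndicator (hpos n) (Iic a) x).coe_nonneg
        have h4 := (thickenedIndicator (hpos n) (Iic a) y).coe_nonneg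
        change dist (thickenedIndicator (hpos n) (Iic a) x : ℝ)
          (thickenedIndicator (hpos n) (Iic a) y : ℝ) ≤ 1
        rw [Real.dist_eq, abs_le]; constructor <;> linarith)
    have := (h.2 φ).ennreal_ofReal
    convert this using 2 with z
    symm
    rw [ofReal_integral_eq_lintegral_ofReal (φ.integrable _)
      (ae_of_all _ fun x => (thickenedIndicator (hpos n) (Iic a) x).coe_nonneg)]
    apply lintegral_congr
    intro x
    exact ENNReal.ofReal_coe_nnreal
  · rw [tendsto_pi_nhds]
    intro z
    exact tendsto_lintegral_thickenedIndicator_of_isClosed (ν z) isClosed_Iic hpos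
      tendsto_one_div_add_atTop_nhds_zero_nat

lemma young_of_measurable {X : Type*} [MeasurableSpace X] {ν : X → Measure ℝ}
    (hp : ∀ z, IsProbabilityMeasure (ν z)) (h : Measurable ν) : IsYoungMeasure ν := by
  refine ⟨hp, fun φ => ?_⟩
  let κ : ProbabilityTheory.Kernel X ℝ := ⟨ν, h⟩
  have : ProbabilityTheory.IsMarkovKernel κ := ⟨hp⟩
  exact (MeasureTheory.StronglyMeasurable.integral_kernel (κ := κ)
    φ.continuous.stronglyMeasurable).measurable

lemma young_joint {X : Type*} [MeasurableSpace X] {ν : X → Measure ℝ}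
    (h : IsYoungMeasure ν) : Measurable fun q : X × ℝ => ((ν q.1) (Ioi q.2)).toReal := by
  let κ : ProbabilityTheory.Kernel (X × ℝ) ℝ := ⟨fun q => ν q.1, (young_measurable h).comp measurable_fst⟩
  have : ProbabilityTheory.IsMarkovKernel κ := ⟨fun q => h.1 q.1⟩
  have ht : MeasurableSet {r : (X × ℝ) × ℝ | r.1.2 < r.2} :=
    measurableSet_lt (measurable_snd.comp measurable_fst) measurable_snd
  exact (ProbabilityTheory.Kernel.measurable_kernel_prodMk_left (κ := κ) ht).ennreal_toReal

lemma young_tail {X : Type*} [MeasurableSpace X] (lam : Measure X) [IsFiniteMeasure lam]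
    {ν : X → Measure ℝ} (h : IsYoungMeasure ν) {p : ℝ} (hp : 1 ≤ p) {C : ℝ≥0∞} (hC : C ≠ ⊤)
    (hm : (∫⁻ z, (∫⁻ ξ, ENNReal.ofReal (|ξ| ^ p) ∂(ν z)) ∂lam) ≤ C)
    (k : ℕ) {E : Set ℝ} (hE : MeasurableSet E) (hEk : ∀ x ∈ E, (k : ℝ) + 1 ≤ |x|) :
    ∫ z, (ν z).real E ∂lam ≤ C.toReal / ((k : ℝ) + 1) := by
  have hpr := h.1
  have hk : (k : ℝ≥0∞) + 1 ≠ 0 := by simp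
  have hk' : (k : ℝ≥0∞) + 1 ≠ ⊤ := by finiteness
  have h1 : ∀ z, ν z E ≤ ((k : ℝ≥0∞) + 1)⁻¹ * ∫⁻ ξ, ENNReal.ofReal (|ξ| ^ p) ∂(ν z) := by
    intro z
    rw [← ENNReal.mul_le_iff_le_inv hk hk']
    have hmeas : Measurable fun ξ : ℝ => ENNReal.ofReal (|ξ| ^ p) := by fun_prop
    refine le_trans ?_ (mul_meas_ge_le_lintegral₀ hmeas.aemeasurable ((k : ℝ≥0∞) + 1))
    gcongr
    intro x hx
    have hx1 := hEk x hx
    have : (k : ℝ) + 1 ≤ |x| ^ p :=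
      hx1.trans (Real.self_le_rpow_of_one_le (le_trans (by linarith [k.cast_nonneg (α := ℝ)]) hx1) hp)
    change (k : ℝ≥0∞) + 1 ≤ _
    have e : (k : ℝ≥0∞) + 1 = ENNReal.ofReal ((k : ℝ) + 1) := by
      rw [ENNReal.ofReal_add (by positivity) zero_le_one]; simp
    rw [e]
    exact ENNReal.ofReal_le_ofReal this
  have h2 : ∫⁻ z, ν z E ∂lam ≤ ((k : ℝ≥0∞) + 1)⁻¹ * C := by
    refine (lintegral_mono h1).trans ?_
    rw [lintegral_const_mul' _ _ (by simp)]
    gcongr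
  have hmE : Measurable fun z => ν z E := (Measure.measurable_coe hE).comp (young_measurable h)
  have e : ∫ z, (ν z).real E ∂lam = (∫⁻ z, ν z E ∂lam).toReal :=
    integral_toReal hmE.aemeasurable (ae_of_all _ fun z => measure_lt_top _ _)
  rw [e]
  refine (ENNReal.toReal_mono (by finiteness) h2).trans ?_
  rw [ENNReal.toReal_mul, ENNReal.toReal_inv, ENNReal.toReal_add (by simp) (by simp)]
  simp [div_eq_inv_mul]

lemma ratPoint_aux {X : Type*} (h : ℚ → X → ℝ) (z : X) (hb : ∀ q, 0 ≤ h q z ∧ h q z ≤ 1)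
    (hmono : ∀ q r, q ≤ r → h q z ≤ h r z)
    (h0 : Tendsto (fun k : ℕ => h (-((k : ℚ) + 1)) z) atTop (𝓝 0))
    (h1 : Tendsto (fun k : ℕ => h ((k : ℚ) + 1) z) atTop (𝓝 1)) :
    ProbabilityTheory.IsRatStieltjesPoint (fun z q => ⨅ r : Ioi q, h r z) z ∧
      (∀ q, h q z ≤ ⨅ r : Ioi q, h r z) ∧ ∀ q r, q < r → ⨅ r : Ioi q, h r z ≤ h r z := by
  have hbdd : ∀ q : ℚ, BddBelow (range fun r : Ioi q => h r z) :=
    fun q => ⟨0, by rintro _ ⟨r, rfl⟩; exact (hb r).1⟩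
  have hne : ∀ q : ℚ, Nonempty (Ioi q) := fun q => ⟨⟨q + 1, by simp⟩⟩
  have A : ∀ q, h q z ≤ ⨅ r : Ioi q, h r z := fun q => le_ciInf fun r => hmono _ _ r.2.le
  have B : ∀ q r, q < r → ⨅ r : Ioi q, h r z ≤ h r z := fun q r hqr => ciInf_le (hbdd q) ⟨r, hqr⟩
  have M : Monotone (fun q : ℚ => ⨅ r : Ioi q, h r z) := by
    intro q r hqr
    exact le_ciInf fun t => B q t (lt_of_le_of_lt hqr t.2)
  refine ⟨⟨M, ?_, ?_, ?_⟩, A, B⟩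
  · rw [tendsto_order]
    constructor
    · intro a ha
      obtain ⟨k, hk⟩ := ((tendsto_order.1 h1).1 a ha).exists
      filter_upwards [eventually_ge_atTop ((k : ℚ) + 1)] with q hq
      exact hk.trans_le ((hmono _ _ hq).trans (A q))
    · intro a ha
      filter_upwards with q
      exact (B q (q + 1) (by simp)).trans_lt ((hb _).2.trans_lt ha)
  · rw [tendsto_order]
    constructor
    · intro a ha
      filter_upwards with q
      exact ha.trans_le ((hb q).1.trans (A q))
    · intro a ha
      obtain ⟨k, hk⟩ := ((tendsto_order.1 h0).2 a ha).exists
      filter_upwards [eventually_lt_atBot (-((k : ℚ) + 1))] with q hq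
      exact (B _ _ hq).trans_lt hk
  · intro t
    apply le_antisymm
    · refine le_ciInf fun r => ?_
      obtain ⟨m, hm1, hm2⟩ := exists_between (show t < r.1 from r.2)
      refine (ciInf_le ⟨0, ?_⟩ (⟨m, hm1⟩ : Ioi t)).trans (B m r hm2)
      rintro _ ⟨r, rfl⟩
      exact (hb r).1.trans (A r)
    · exact le_ciInf fun r => M (le_of_lt r.2)

lemma conv_aux {X : Type*} [MeasurableSpace X] (lam : Measure X) [IsFiniteMeasure lam]
    (U : ℕ → X → ℝ → ℝ) (hUm : ∀ n x, Measurable fun z => U n z x)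
    (hUb : ∀ n z x, 0 ≤ U n z x ∧ U n z x ≤ 1) (hUmono : ∀ n z, Monotone (U n z))
    (F : X → ℝ → ℝ) (hFm : ∀ x, Measurable fun z => F z x)
    (hFb : ∀ z x, 0 ≤ F z x ∧ F z x ≤ 1) (hFmono : ∀ z, Monotone (F z))
    (h : ℚ → X → ℝ) (hm : ∀ q, Measurable (h q)) (hb : ∀ q z, 0 ≤ h q z ∧ h q z ≤ 1)
    (h1 : ∀ᵐ z ∂lam, ∀ q : ℚ, h q z ≤ F z q)
    (h2 : ∀ᵐ z ∂lam, ∀ q r : ℚ, q < r → F z q ≤ h r z)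
    (hlim : ∀ q : ℚ, ∀ ψ : X → ℝ, Integrable ψ lam →
      Tendsto (fun k => ∫ z, U k z q * ψ z ∂lam) atTop (𝓝 (∫ z, h q z * ψ z ∂lam)))
    (x : ℝ) (hx : ContinuousAt (fun x => ∫ z, F z x ∂lam) x)
    (ψ : X → ℝ) (hψ : Integrable ψ lam) :
    Tendsto (fun k => ∫ z, U k z x * ψ z ∂lam) atTop (𝓝 (∫ z, F z x * ψ z ∂lam)) := by
  have bI : ∀ w : X → ℝ, Measurable w → (∀ z, 0 ≤ w z ∧ w z ≤ 1) → ∀ ψ : X → ℝ,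
      Integrable ψ lam → Integrable (fun z => w z * ψ z) lam := by
    intro w hw hwb ψ hψ
    refine hψ.bdd_mul (c := 1) hw.aestronglyMeasurable (ae_of_all _ fun z => ?_)
    rw [Real.norm_eq_abs, abs_of_nonneg (hwb z).1]; exact (hwb z).2
  have bI1 : ∀ w : X → ℝ, Measurable w → (∀ z, 0 ≤ w z ∧ w z ≤ 1) → Integrable w lam := by
    intro w hw hwb
    simpa using bI w hw hwb (fun _ => 1) (integrable_const _)
  have hd : Tendsto (fun k : ℕ => 1 / ((k : ℝ) + 1)) atTop (𝓝 0) :=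
    tendsto_one_div_add_atTop_nhds_zero_nat
  have hpos : ∀ k : ℕ, (0 : ℝ) < 1 / ((k : ℝ) + 1) := fun n => by positivity
  have hanti : ∀ i j : ℕ, i ≤ j → 1 / ((j : ℝ) + 1) ≤ 1 / ((i : ℝ) + 1) :=
    fun i j hij => Nat.one_div_le_one_div hij
  have hl : Tendsto (fun k : ℕ => x - 1 / ((k : ℝ) + 1)) atTop (𝓝 x) := by
    simpa using hd.const_sub x
  have hr : Tendsto (fun k : ℕ => x + 1 / ((k : ℝ) + 1)) atTop (𝓝 x) := by
    simpa using hd.const_add x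
  have aeL : ∀ᵐ z ∂lam, Tendsto (fun k : ℕ => F z (x - 1 / ((k : ℝ) + 1))) atTop (𝓝 (F z x)) := by
    refine tendsto_of_integral_tendsto_of_monotone (fun n => bI1 _ (hFm _) fun z => hFb z _)
      (bI1 _ (hFm _) fun z => hFb z _) (hx.tendsto.comp hl) ?_ ?_
    · exact ae_of_all _ fun z i j hij => hFmono z (by linarith [hanti i j hij])
    · exact ae_of_all _ fun z i => hFmono z (by linarith [hpos i])
  have aeR : ∀ᵐ z ∂lam, Tendsto (fun k : ℕ => F z (x + 1 / ((k : ℝ) + 1))) atTop (𝓝 (F z x)) := by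
    refine tendsto_of_integral_tendsto_of_antitone (fun n => bI1 _ (hFm _) fun z => hFb z _)
      (bI1 _ (hFm _) fun z => hFb z _) (hx.tendsto.comp hr) ?_ ?_
    · exact ae_of_all _ fun z i j hij => hFmono z (by linarith [hanti i j hij])
    · exact ae_of_all _ fun z i => hFmono z (by linarith [hpos i])
  have dct : ∀ y : ℕ → ℝ, (∀ᵐ z ∂lam, Tendsto (fun k => F z (y k)) atTop (𝓝 (F z x))) →
      ∀ ψ : X → ℝ, Integrable ψ lam →
      Tendsto (fun k => ∫ z, F z (y k) * ψ z ∂lam) atTop (𝓝 (∫ z, F z x * ψ z ∂lam)) := by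
    intro y hy ψ hψ
    refine tendsto_integral_of_dominated_convergence (fun z => ‖ψ z‖) (fun n =>
      (bI _ (hFm _) (fun z => hFb z _) ψ hψ).aestronglyMeasurable) hψ.norm ?_ ?_
    · refine fun n => ae_of_all _ fun z => ?_
      rw [norm_mul, Real.norm_eq_abs, abs_of_nonneg (hFb z _).1]
      exact mul_le_of_le_one_left (norm_nonneg _) (hFb z _).2
    · filter_upwards [hy] with z hz
      exact hz.mul_const _
  have main : ∀ ψ : X → ℝ, Integrable ψ lam → (∀ z, 0 ≤ ψ z) →
      Tendsto (fun k => ∫ z, U k z x * ψ z ∂lam) atTop (𝓝 (∫ z, F z x * ψ z ∂lam)) := by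
    intro ψ hψ hψ0
    rw [tendsto_order]
    constructor
    · intro a ha
      obtain ⟨k, hk⟩ := ((tendsto_order.1 (dct _ aeL ψ hψ)).1 a ha).exists
      obtain ⟨q', hq1, hq2⟩ := exists_rat_btwn (show x - 1 / ((k : ℝ) + 1) < x by linarith [hpos k])
      obtain ⟨q, hq3, hq4⟩ := exists_rat_btwn hq2
      have hle : ∫ z, F z (x - 1 / ((k : ℝ) + 1)) * ψ z ∂lam ≤ ∫ z, h q z * ψ z ∂lam := by
        refine integral_mono_ae (bI _ (hFm _) (fun z => hFb z _) ψ hψ)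
          (bI _ (hm _) (fun z => hb _ z) ψ hψ) ?_
        filter_upwards [h2] with z hz
        exact mul_le_mul_of_nonneg_right ((hFmono z hq1.le).trans
          (hz q' q (by exact_mod_cast hq3))) (hψ0 z)
      filter_upwards [(tendsto_order.1 (hlim q ψ hψ)).1 a (hk.trans_le hle)] with n hn
      refine hn.trans_le (integral_mono (bI _ (hUm _ _) (fun z => hUb _ z _) ψ hψ)
        (bI _ (hUm _ _) (fun z => hUb _ z _) ψ hψ) fun z => ?_)
      exact mul_le_mul_of_nonneg_right (hUmono n z hq4.le) (hψ0 z)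
    · intro a ha
      obtain ⟨k, hk⟩ := ((tendsto_order.1 (dct _ aeR ψ hψ)).2 a ha).exists
      obtain ⟨q, hq1, hq2⟩ := exists_rat_btwn (show x < x + 1 / ((k : ℝ) + 1) by linarith [hpos k])
      have hle : ∫ z, h q z * ψ z ∂lam ≤ ∫ z, F z (x + 1 / ((k : ℝ) + 1)) * ψ z ∂lam := by
        refine integral_mono_ae (bI _ (hm _) (fun z => hb _ z) ψ hψ)
          (bI _ (hFm _) (fun z => hFb z _) ψ hψ) ?_
        filter_upwards [h1] with z hz
        exact mul_le_mul_of_nonneg_right ((hz q).trans (hFmono z hq2.le)) (hψ0 z)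
      filter_upwards [(tendsto_order.1 (hlim q ψ hψ)).2 a (hle.trans_lt hk)] with n hn
      refine (integral_mono (bI _ (hUm _ _) (fun z => hUb _ z _) ψ hψ)
        (bI _ (hUm _ _) (fun z => hUb _ z _) ψ hψ) fun z => ?_).trans_lt hn
      exact mul_le_mul_of_nonneg_right (hUmono n z hq1.le) (hψ0 z)
  have split : ∀ w : X → ℝ, Measurable w → (∀ z, 0 ≤ w z ∧ w z ≤ 1) →
      ∫ z, w z * ψ z ∂lam = ∫ z, w z * max (ψ z) 0 ∂lam - ∫ z, w z * max (-ψ z) 0 ∂lam := by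
    intro w hw hwb
    rw [← integral_sub (bI w hw hwb _ hψ.pos_part) (bI w hw hwb _ hψ.neg_part)]
    congr 1; ext z
    rw [← mul_sub]
    congr 1
    rcases le_total 0 (ψ z) with h | h
    · rw [max_eq_left h, max_eq_right (by linarith)]; ring
    · rw [max_eq_right h, max_eq_left (by linarith)]; ring
  rw [split _ (hFm x) (fun z => hFb z x)]
  simp_rw [fun k => split _ (hUm k x) (fun z => hUb k z x)]
  exact (main _ hψ.pos_part fun z => le_max_right _ _).sub
    (main _ hψ.neg_part fun z => le_max_right _ _)

/-- Weak-* compactness of kinetic functions: given Young measures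
`ν^n` with a uniform `p`-th moment bound (`p ≥ 1`) on a finite measure space with
separable `L¹`, the kinetic functions `f_n(z,ξ) = ν^n_z((ξ,∞))` admit a subsequence
converging weak-* in `L^∞(X × ℝ)` to the kinetic function `f(z,ξ) = ν_z((ξ,∞))` of a
Young measure `ν`: for every `g ∈ L¹(X × ℝ, λ ⊗ Leb)`,
`∫∫ f_n g → ∫∫ f g`. -/
theorem kineticFunction_weakStar_compactness
    {X : Type*} [MeasurableSpace X] (lam : Measure X) [IsFiniteMeasure lam]
    (hsep : TopologicalSpace.SeparableSpace (MeasureTheory.Lp ℝ 1 lam))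
    (p : ℝ) (hp : 1 ≤ p) (ν : ℕ → X → Measure ℝ)
    (hY : ∀ n, IsYoungMeasure (ν n))
    (hmom : ∃ C : ℝ≥0∞, C ≠ ⊤ ∧
      ∀ n, (∫⁻ z, (∫⁻ ξ, ENNReal.ofReal (|ξ| ^ p) ∂(ν n z)) ∂lam) ≤ C) :
    ∃ (νl : X → Measure ℝ) (s : ℕ → ℕ), IsYoungMeasure νl ∧ StrictMono s ∧
      ∀ g : X × ℝ → ℝ, Integrable g (lam.prod volume) →
        Tendsto
          (fun k => ∫ q : X × ℝ,
            ((ν (s k) q.1) (Ioi q.2)).toReal * g q ∂(lam.prod volume)) atTop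
          (𝓝 (∫ q : X × ℝ,
            ((νl q.1) (Ioi q.2)).toReal * g q ∂(lam.prod volume))) := by
  obtain ⟨C, hC, hmom⟩ := hmom
  have hpr : ∀ n z, IsProbabilityMeasure (ν n z) := fun n => (hY n).1
  have hνm := fun n => young_measurable (hY n)
  have hUm : ∀ n (x : ℝ), Measurable fun z => (ν n z).real (Iic x) := fun n x =>
    ((Measure.measurable_coe measurableSet_Iic).comp (hνm n)).ennreal_toReal
  have hUb : ∀ n z (x : ℝ), 0 ≤ (ν n z).real (Iic x) ∧ (ν n z).real (Iic x) ≤ 1 :=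
    fun n z x => ⟨measureReal_nonneg, measureReal_le_one⟩
  obtain ⟨s, h, hs, hm, hb, hlim⟩ := weakStar_aux lam hsep
    (fun n (q : ℚ) z => (ν n z).real (Iic (q : ℝ))) (fun n q => hUm n q) (fun n q z => hUb n z q)
  have bI1 : ∀ w : X → ℝ, Measurable w → (∀ z, 0 ≤ w z ∧ w z ≤ 1) → Integrable w lam := by
    intro w hw hwb
    refine (integrable_const (1 : ℝ)).mono' hw.aestronglyMeasurable (ae_of_all _ fun z => ?_)
    rw [Real.norm_eq_abs, abs_of_nonneg (hwb z).1]; exact (hwb z).2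
  have hlim1 : ∀ q : ℚ, Tendsto (fun k => ∫ z, (ν (s k) z).real (Iic (q : ℝ)) ∂lam) atTop
      (𝓝 (∫ z, h q z ∂lam)) := by
    intro q
    simpa using hlim q (fun _ => 1) (integrable_const _)
  have hmono : ∀ᵐ z ∂lam, ∀ q r : ℚ, q ≤ r → h q z ≤ h r z := by
    rw [ae_all_iff]; intro q
    rw [ae_all_iff]; intro r
    by_cases hqr : q ≤ r
    swap
    · exact ae_of_all _ fun z hh => absurd hh hqr
    have : h q ≤ᵐ[lam] h r := by
      refine ae_le_of_forall_setIntegral_le (bI1 _ (hm q) (hb q)) (bI1 _ (hm r) (hb r)) ?_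
      intro t ht _
      have e : ∀ w : X → ℝ, ∫ z, w z * t.indicator (fun _ => (1 : ℝ)) z ∂lam
          = ∫ z in t, w z ∂lam := by
        intro w
        rw [← integral_indicator ht]
        congr 1; ext z
        by_cases hz : z ∈ t <;> simp [hz]
      have hi : Integrable (t.indicator (fun _ => (1 : ℝ))) lam :=
        (integrable_const _).indicator ht
      have l1 := hlim q _ hi
      have l2 := hlim r _ hi
      simp only [e] at l1 l2
      refine le_of_tendsto_of_tendsto' l1 l2 fun k => ?_
      refine integral_mono (bI1 _ (hUm _ _) fun z => hUb _ z _).integrableOn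
        (bI1 _ (hUm _ _) fun z => hUb _ z _).integrableOn fun z => ?_
      exact measureReal_mono (Iic_subset_Iic.2 (by exact_mod_cast hqr))
    filter_upwards [this] with z hz _ using hz
  have hCk : Tendsto (fun k : ℕ => C.toReal / ((k : ℝ) + 1)) atTop (𝓝 0) := by
    simpa [div_eq_mul_inv] using
      (tendsto_one_div_add_atTop_nhds_zero_nat (𝕜 := ℝ)).const_mul C.toReal
  have ae0 : ∀ᵐ z ∂lam, Tendsto (fun k : ℕ => h (-((k : ℚ) + 1)) z) atTop (𝓝 0) := by
    refine tendsto_of_integral_tendsto_of_antitone (F := fun _ => 0)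
      (fun k => bI1 _ (hm _) (hb _)) (integrable_const _) ?_ ?_ ?_
    · rw [integral_zero]
      refine squeeze_zero (fun k => integral_nonneg fun z => (hb _ z).1) (fun k => ?_) hCk
      refine le_of_tendsto' (hlim1 _) fun n => ?_
      refine young_tail lam (hY (s n)) hp hC (hmom _) k measurableSet_Iic ?_
      intro x hx
      have hx' : x ≤ -((k : ℝ) + 1) := by simpa using hx
      rw [le_abs]; right; linarith
    · filter_upwards [hmono] with z hz i j hij
      refine hz _ _ ?_
      have : (i : ℚ) ≤ j := by exact_mod_cast hij
      linarith
    · exact ae_of_all _ fun z i => (hb _ z).1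
  have ae1 : ∀ᵐ z ∂lam, Tendsto (fun k : ℕ => h ((k : ℚ) + 1) z) atTop (𝓝 1) := by
    refine tendsto_of_integral_tendsto_of_monotone (F := fun _ => 1)
      (fun k => bI1 _ (hm _) (hb _)) (integrable_const _) ?_ ?_ ?_
    · have hz : Tendsto (fun k : ℕ => ∫ z, (1 : ℝ) ∂lam - ∫ z, h ((k : ℚ) + 1) z ∂lam)
          atTop (𝓝 0) := by
        refine squeeze_zero (fun k => ?_) (fun k => ?_) hCk
        · rw [sub_nonneg]
          exact integral_mono (bI1 _ (hm _) (hb _)) (integrable_const _) fun z => (hb _ z).2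
        · refine le_of_tendsto' ((hlim1 _).const_sub _) fun n => ?_
          rw [← integral_sub (integrable_const _) (bI1 _ (hUm _ _) fun z => hUb _ z _)]
          have e : ∀ z, 1 - (ν (s n) z).real (Iic ((((k : ℚ) + 1 : ℚ)) : ℝ)) =
              (ν (s n) z).real (Ioi ((((k : ℚ) + 1 : ℚ)) : ℝ)) := by
            intro z
            rw [← compl_Iic, probReal_compl_eq_one_sub measurableSet_Iic]
          simp_rw [e]
          refine young_tail lam (hY (s n)) hp hC (hmom _) k measurableSet_Ioi ?_
          intro x hx
          have hx' : (k : ℝ) + 1 < x := by simpa using hx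
          rw [le_abs]; left; linarith
      simpa using hz.const_sub (∫ z, (1 : ℝ) ∂lam)
    · filter_upwards [hmono] with z hz i j hij
      refine hz _ _ ?_
      have : (i : ℚ) ≤ j := by exact_mod_cast hij
      linarith
    · exact ae_of_all _ fun z i => (hb _ z).2
  let c : X → ℚ → ℝ := fun z q => ⨅ r : Ioi q, h r z
  have hc : Measurable c := by
    rw [measurable_pi_iff]
    intro q
    exact Measurable.iInf fun r => hm r
  let F := ProbabilityTheory.stieltjesOfMeasurableRat c hc
  have hgood : ∀ᵐ z ∂lam, (∀ q : ℚ, h q z ≤ F z q) ∧ ∀ q r : ℚ, q < r → F z q ≤ h r z := by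
    filter_upwards [hmono, ae0, ae1] with z z1 z2 z3
    obtain ⟨hp1, hp2, hp3⟩ := ratPoint_aux h z (fun q => hb q z) z1 z2 z3
    have e : ∀ q : ℚ, F z q = ⨅ r : Ioi q, h r z := by
      intro q
      rw [ProbabilityTheory.stieltjesOfMeasurableRat_eq,
        ProbabilityTheory.toRatCDF_of_isRatStieltjesPoint hp1]
    exact ⟨fun q => by rw [e]; exact hp2 q, fun q r hqr => by rw [e]; exact hp3 q r hqr⟩
  have hFm : ∀ x, Measurable fun z => F z x := fun x =>
    ProbabilityTheory.measurable_stieltjesOfMeasurableRat hc x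
  have hFb : ∀ z x, 0 ≤ F z x ∧ F z x ≤ 1 := fun z x =>
    ⟨ProbabilityTheory.stieltjesOfMeasurableRat_nonneg hc z x,
      ProbabilityTheory.stieltjesOfMeasurableRat_le_one hc z x⟩
  have hYl : IsYoungMeasure fun z => (F z).measure := young_of_measurable
    (fun z => ProbabilityTheory.instIsProbabilityMeasure_stieltjesOfMeasurableRat hc z)
    (ProbabilityTheory.measurable_measure_stieltjesOfMeasurableRat hc)
  refine ⟨fun z => (F z).measure, s, hYl, hs, ?_⟩
  intro g hg
  have hprl : ∀ z, IsProbabilityMeasure (F z).measure := hYl.1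
  have hFe : ∀ z x, ((F z).measure (Ioi x)).toReal = 1 - F z x := by
    intro z x
    change (F z).measure.real (Ioi x) = _
    rw [← compl_Iic, probReal_compl_eq_one_sub measurableSet_Iic, measureReal_def,
      ProbabilityTheory.measure_stieltjesOfMeasurableRat_Iic,
      ENNReal.toReal_ofReal (hFb z x).1]
  have hUe : ∀ n z x, ((ν n z) (Ioi x)).toReal = 1 - (ν n z).real (Iic x) := by
    intro n z x
    change (ν n z).real (Ioi x) = _
    rw [← compl_Iic, probReal_compl_eq_one_sub measurableSet_Iic]
  have hint : ∀ μ : X → Measure ℝ, IsYoungMeasure μ →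
      Integrable (fun q : X × ℝ => ((μ q.1) (Ioi q.2)).toReal * g q) (lam.prod volume) := by
    intro μ hμ
    have := hμ.1
    refine hg.bdd_mul (c := 1) (young_joint hμ).aestronglyMeasurable (ae_of_all _ fun q => ?_)
    rw [Real.norm_eq_abs, abs_of_nonneg ENNReal.toReal_nonneg]
    exact measureReal_le_one
  rw [integral_prod_symm _ (hint _ hYl)]
  simp_rw [fun k => integral_prod_symm _ (hint _ (hY (s k)))]
  have hΦ : Monotone fun x => ∫ z, F z x ∂lam := by
    intro x y hxy
    exact integral_mono (bI1 _ (hFm _) fun z => hFb z _) (bI1 _ (hFm _) fun z => hFb z _)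
      fun z => (F z).mono hxy
  refine tendsto_integral_of_dominated_convergence (fun x => ∫ z, ‖g (z, x)‖ ∂lam)
    (fun k => (hint _ (hY (s k))).integral_prod_right.aestronglyMeasurable)
    hg.norm.integral_prod_right ?_ ?_
  · intro k
    filter_upwards [hg.prod_left_ae] with x hx
    refine norm_integral_le_of_norm_le hx.norm (ae_of_all _ fun z => ?_)
    rw [norm_mul, Real.norm_eq_abs, abs_of_nonneg ENNReal.toReal_nonneg]
    exact mul_le_of_le_one_left (norm_nonneg _) measureReal_le_one
  · filter_upwards [hg.prod_left_ae, hΦ.countable_not_continuousAt.ae_notMem volume] with x hx hxc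
    have hxc' : ContinuousAt (fun x => ∫ z, F z x ∂lam) x := by
      by_contra hcon
      exact hxc hcon
    have hconv := conv_aux lam (fun k z x => (ν (s k) z).real (Iic x)) (fun k x => hUm _ x)
      (fun k z x => hUb _ z x) (fun k z x y hxy => measureReal_mono (Iic_subset_Iic.2 hxy))
      (fun z => F z) hFm hFb (fun z => (F z).mono) h hm hb (hgood.mono fun z hz => hz.1)
      (hgood.mono fun z hz => hz.2) hlim x hxc' (fun z => g (z, x)) hx
    have e : ∀ w : X → ℝ, Measurable w → (∀ z, 0 ≤ w z ∧ w z ≤ 1) →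
        ∫ z, (1 - w z) * g (z, x) ∂lam = ∫ z, g (z, x) ∂lam - ∫ z, w z * g (z, x) ∂lam := by
      intro w hw hwb
      rw [← integral_sub hx]
      · congr 1; ext z; ring
      · refine hx.bdd_mul (c := 1) hw.aestronglyMeasurable (ae_of_all _ fun z => ?_)
        rw [Real.norm_eq_abs, abs_of_nonneg (hwb z).1]; exact (hwb z).2
    simp_rw [hFe, hUe]
    rw [e _ (hFm x) fun z => hFb z x]
    simp_rw [fun k => e _ (hUm (s k) x) fun z => hUb (s k) z x]
    exact hconv.const_sub _
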